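/- The tautological tableau attains Cartan's bound for every flag: let W, V be finite-dimensional real vector spaces with dim W = n, dim V = m, let k ≥ 1, and take the full tableau T = Λ^k(W;V) of (k−1)-derivations with trivial symbol. For any full flag 0 = W_0 ⊂ … ⊂ W_n = W, with T_{W_i} = {c ∈ T : c(u_1,…,u_k) = 0 whenever u_1,…,u_k ∈ W_i} and Cartan characters s_i = dim T_{W_{i-1}} − dim T_{W_i}, one has dim ker( δ : Hom(W,T) → Λ^{k+1}(W;V) ) = s_1 + 2·s_2 + … + n·s_n, where (δξ)(w_0,…,w_k) = Σ_{i=0}^{k} (−1)^i ξ(w_i)(w_0,…,ŵ_i,…,w_k). -/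

import Mathlib

open Module

variable {W : Type*} [AddCommGroup W] [Module ℝ W] [FiniteDimensional ℝ W]
variable {V : Type*} [AddCommGroup V] [Module ℝ V] [FiniteDimensional ℝ V]

/-- The alternating `k`-linear maps `W^k → V` vanishing whenever all of their arguments lie
in the subspace `U ⊆ W`; for the tautological (full) tableau `T = Λ^k(W;V)`, this is `T_U`. -/
def vanishingOn (k : ℕ) (U : Submodule ℝ W) :
    Submodule ℝ (AlternatingMap ℝ W V (Fin k)) where
  carrier := {c | ∀ u : Fin k → W, (∀ i, u i ∈ U) → c u = 0}
  zero_mem' := by intro u _; simp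
  add_mem' := by intro a b ha hb u hu; simp [ha u hu, hb u hu]
  smul_mem' := by intro r a ha u hu; simp [ha u hu]

/-- The kernel of the Spencer differential `δ : Hom(W, Λ^k(W;V)) → Λ^{k+1}(W;V)`,
`(δξ)(w₀,…,w_k) = ∑ᵢ (-1)^i ξ(wᵢ)(w₀,…,ŵᵢ,…,w_k)`; this is the first prolongation of the
tautological tableau `Λ^k(W;V)` of `(k−1)`-derivations with trivial symbol. -/
def spencerKer (k : ℕ) (W V : Type*) [AddCommGroup W] [Module ℝ W]
    [AddCommGroup V] [Module ℝ V] :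
    Submodule ℝ (W →ₗ[ℝ] AlternatingMap ℝ W V (Fin k)) where
  carrier := {ξ | ∀ w : Fin (k + 1) → W,
    ∑ i : Fin (k + 1), ((-1 : ℝ) ^ (i : ℕ)) • ξ (w i) (w ∘ i.succAbove) = 0}
  zero_mem' := by intro w; simp
  add_mem' := by
    intro a b ha hb w
    have h := ha w
    have h' := hb w
    simp only [LinearMap.add_apply, AlternatingMap.add_apply, smul_add,
      Finset.sum_add_distrib, h, h', add_zero]
  smul_mem' := by
    intro c ξ h w
    have hw := h w
    calc ∑ i : Fin (k + 1), ((-1 : ℝ) ^ (i : ℕ)) • (c • ξ) (w i) (w ∘ i.succAbove)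
        = c • ∑ i : Fin (k + 1), ((-1 : ℝ) ^ (i : ℕ)) • ξ (w i) (w ∘ i.succAbove) := by
          rw [Finset.smul_sum]
          refine Finset.sum_congr rfl fun i _ => ?_
          rw [LinearMap.smul_apply, AlternatingMap.smul_apply, smul_comm]
      _ = 0 := by rw [hw, smul_zero]

/-- Precomposition with a linear map, as a linear map between spaces of alternating maps. -/
def AlternatingMap.precompLinear {U W : Type*} [AddCommGroup U] [Module ℝ U]
    [AddCommGroup W] [Module ℝ W] (k : ℕ) (V : Type*) [AddCommGroup V] [Module ℝ V]
    (f : U →ₗ[ℝ] W) :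
    AlternatingMap ℝ W V (Fin k) →ₗ[ℝ] AlternatingMap ℝ U V (Fin k) where
  toFun c := c.compLinearMap f
  map_add' _ _ := rfl
  map_smul' _ _ := rfl

theorem AlternatingMap.finite_fin (k : ℕ) (W V : Type*) [AddCommGroup W] [Module ℝ W]
    [FiniteDimensional ℝ W] [AddCommGroup V] [Module ℝ V] [FiniteDimensional ℝ V] :
    FiniteDimensional ℝ (AlternatingMap ℝ W V (Fin k)) :=
  Module.Finite.equiv exteriorPower.alternatingMapLinearEquiv.symm

theorem AlternatingMap.finrank_fin (k : ℕ) (W V : Type*) [AddCommGroup W] [Module ℝ W]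
    [FiniteDimensional ℝ W] [AddCommGroup V] [Module ℝ V] [FiniteDimensional ℝ V] :
    finrank ℝ (AlternatingMap ℝ W V (Fin k)) = (finrank ℝ W).choose k * finrank ℝ V := by
  rw [(exteriorPower.alternatingMapLinearEquiv (R := ℝ) (M := W) (N := V) (n := k)).finrank_eq,
    finrank_linearMap, exteriorPower.finrank_eq]

theorem vanishingOn_eq_ker {W V : Type*} [AddCommGroup W] [Module ℝ W]
    [AddCommGroup V] [Module ℝ V] (k : ℕ) (U : Submodule ℝ W) :
    vanishingOn k U (V := V) = LinearMap.ker (AlternatingMap.precompLinear k V U.subtype) := by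
  ext c
  refine ⟨fun h => ?_, fun h u hu => ?_⟩
  · ext u
    exact h _ fun i => (u i).2
  · exact DFunLike.congr_fun (LinearMap.mem_ker.1 h) fun i => (⟨u i, hu i⟩ : U)

theorem precompLinear_subtype_surjective {W V : Type*} [AddCommGroup W] [Module ℝ W]
    [AddCommGroup V] [Module ℝ V] (k : ℕ) (U : Submodule ℝ W) :
    Function.Surjective (AlternatingMap.precompLinear k V U.subtype) := by
  obtain ⟨p, hp⟩ := U.subtype.exists_leftInverse_of_injective U.ker_subtype
  intro c
  refine ⟨c.compLinearMap p, ?_⟩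
  ext u
  exact congrArg c (funext fun i => LinearMap.congr_fun hp (u i))

theorem finrank_vanishingOn_add (k : ℕ) (U : Submodule ℝ W) :
    finrank ℝ ↥(vanishingOn k U (V := V)) + (finrank ℝ U).choose k * finrank ℝ V =
      (finrank ℝ W).choose k * finrank ℝ V := by
  have := AlternatingMap.finite_fin k W V
  have h := (AlternatingMap.precompLinear k V U.subtype).finrank_range_add_finrank_ker
  rw [LinearMap.range_eq_top.2 (precompLinear_subtype_surjective k U), finrank_top,
    AlternatingMap.finrank_fin, AlternatingMap.finrank_fin, ← vanishingOn_eq_ker] at h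
  omega

theorem spencerKer_eq_ker (k : ℕ) (W V : Type*) [AddCommGroup W] [Module ℝ W]
    [AddCommGroup V] [Module ℝ V] :
    spencerKer k W V = LinearMap.ker (AlternatingMap.alternatizeUncurryFinLM
      (R := ℝ) (M := W) (N := V) (n := k)) := by
  have key (ξ : W →ₗ[ℝ] AlternatingMap ℝ W V (Fin k)) (w : Fin (k + 1) → W) :
      ∑ i : Fin (k + 1), ((-1 : ℝ) ^ (i : ℕ)) • ξ (w i) (w ∘ i.succAbove) =
        AlternatingMap.alternatizeUncurryFin ξ w := by
    rw [AlternatingMap.alternatizeUncurryFin_apply]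
    refine Finset.sum_congr rfl fun i _ => ?_
    rw [← Int.cast_smul_eq_zsmul ℝ]
    push_cast
    rfl
  ext ξ
  refine ⟨fun h => ?_, fun h w => ?_⟩
  · refine LinearMap.mem_ker.2 (AlternatingMap.ext fun w => ?_)
    exact (key ξ w).symm.trans (h w)
  · exact (key ξ w).trans (DFunLike.congr_fun (LinearMap.mem_ker.1 h) w)

theorem alternatizeUncurryFinLM_surjective (k : ℕ) (W V : Type*) [AddCommGroup W] [Module ℝ W]
    [AddCommGroup V] [Module ℝ V] :
    Function.Surjective (AlternatingMap.alternatizeUncurryFinLM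
      (R := ℝ) (M := W) (N := V) (n := k)) := by
  intro c
  refine ⟨((k + 1 : ℕ) : ℝ)⁻¹ • c.curryLeft, ?_⟩
  rw [map_smul, AlternatingMap.alternatizeUncurryFinLM_apply,
    AlternatingMap.alternatizeUncurryFin_curryLeft, ← Nat.cast_smul_eq_nsmul ℝ,
    inv_smul_smul₀ (by positivity)]

theorem finrank_spencerKer_add (k : ℕ) (W V : Type*) [AddCommGroup W] [Module ℝ W]
    [FiniteDimensional ℝ W] [AddCommGroup V] [Module ℝ V] [FiniteDimensional ℝ V] :
    finrank ℝ ↥(spencerKer k W V) + (finrank ℝ W).choose (k + 1) * finrank ℝ V =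
      finrank ℝ W * ((finrank ℝ W).choose k * finrank ℝ V) := by
  have := AlternatingMap.finite_fin k W V
  have h := (AlternatingMap.alternatizeUncurryFinLM
    (R := ℝ) (M := W) (N := V) (n := k)).finrank_range_add_finrank_ker
  rw [LinearMap.range_eq_top.2 (alternatizeUncurryFinLM_surjective k W V), finrank_top,
    AlternatingMap.finrank_fin, finrank_linearMap, AlternatingMap.finrank_fin,
    ← spencerKer_eq_ker] at h
  omega

theorem sum_succ_mul_choose_add_choose (n j : ℕ) :
    ∑ i : Fin n, ((i : ℕ) + 1) * (i : ℕ).choose j + n.choose (j + 2) =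
      n * n.choose (j + 1) := by
  induction n with
  | zero => simp
  | succ n ih =>
    rw [Fin.sum_univ_castSucc, Nat.choose_succ_succ n (j + 1), Nat.choose_succ_succ n j]
    simp only [Fin.val_castSucc, Fin.val_last]
    linear_combination ih

/-- **The tautological tableau attains Cartan's bound for every flag**: for `k ≥ 1`, the
full tableau `T = Λ^k(W;V)` of `(k−1)`-derivations with trivial symbol, and any full flag
`0 = W₀ ⊂ … ⊂ Wₙ = W` with Cartan characters `sᵢ = dim T_{W_{i-1}} − dim T_{W_i}`,
the first prolongation `ker δ ⊆ Hom(W, Λ^k(W;V))` has dimension `s₁ + 2·s₂ + … + n·sₙ`. -/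
theorem tautological_tableau_cartan_test {n : ℕ} (k : ℕ) (hk : 1 ≤ k)
    (Wf : Fin (n + 1) → Submodule ℝ W)
    (hmono : Monotone Wf) (hbot : Wf 0 = ⊥) (htop : Wf (Fin.last n) = ⊤)
    (hdim : ∀ i : Fin (n + 1), finrank ℝ (Wf i) = (i : ℕ)) :
    finrank ℝ ↥(spencerKer k W V) =
      ∑ i : Fin n, ((i : ℕ) + 1) *
        (finrank ℝ ↥(vanishingOn k (Wf i.castSucc) (V := V)) -
         finrank ℝ ↥(vanishingOn k (Wf i.succ) (V := V))) := by
  obtain ⟨j, rfl⟩ : ∃ j, k = j + 1 := ⟨k - 1, by omega⟩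
  have hn : finrank ℝ W = n := by
    rw [← finrank_top ℝ W, ← htop, hdim, Fin.val_last]
  have hchar (i : Fin n) : finrank ℝ ↥(vanishingOn (j + 1) (Wf i.castSucc) (V := V)) -
      finrank ℝ ↥(vanishingOn (j + 1) (Wf i.succ) (V := V)) =
        (i : ℕ).choose j * finrank ℝ V := by
    have h₁ := finrank_vanishingOn_add (V := V) (j + 1) (Wf i.castSucc)
    have h₂ := finrank_vanishingOn_add (V := V) (j + 1) (Wf i.succ)
    rw [hdim, Fin.val_castSucc] at h₁
    rw [hdim, Fin.val_succ, Nat.choose_succ_succ', add_mul] at h₂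
    omega
  have hker := finrank_spencerKer_add (j + 1) W V
  have hsum := congrArg (· * finrank ℝ V) (sum_succ_mul_choose_add_choose n j)
  simp only [add_mul _ _ (finrank ℝ V), Finset.sum_mul, mul_assoc] at hsum
  rw [hn, ← hsum] at hker
  simp only [hchar]
  exact Nat.add_right_cancel hker
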